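/- arXiv:2510.09811 — 2 statements merged into one kernel-verified Lean document; each statement's English description precedes it below -/
import Mathlib

section
/- Let ℓ ≥ 1, k = 2ℓ−1, and let C be a commutative unital ℂ-algebra containing an invertible element g and elements e₀ = 1, e₁, …, e_{2ℓ−1} satisfying the reciprocal relations g^{k−i}·e_i = e_k·e_{k−i} for all i = 0, 1, …, k−1. Define s := g^{1−ℓ}·e_{2ℓ−1}. Then s² = g, e_{2ℓ−1} = s^{2ℓ−1}, and e_{ℓ+i} = s^{2i+1}·e_{ℓ−1−i} for all i = 0, 1, …, ℓ−1. -/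
/-!
Write `k = 2m + 1`. The relation at `i = 0` says `e_k² = g^k`; since `k` is odd, dividing `e_k` by
`g^m` gives a square root `s` of `g`, and `e_k = s^k`. In terms of `s`, the relation at `i` becomes
`s^{2(k-i)} e_i = s^k e_{k-i}`, and cancelling `s^k` leaves `e_{k-i} = s^{k-2i} e_i`.
-/

section OddPower

variable {M : Type*} [CommMonoid M] {g : Mˣ} {x : M} {m : ℕ}

theorem inv_pow_mul_sq_of_sq_eq_odd_pow (h : x ^ 2 = (g : M) ^ (2 * m + 1)) :
    ((↑g⁻¹ : M) ^ m * x) ^ 2 = g := by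
  have hunit : g⁻¹ ^ (2 * m) * g ^ (2 * m + 1) = g := by
    rw [pow_succ, inv_pow, inv_mul_cancel_left]
  calc ((↑g⁻¹ : M) ^ m * x) ^ 2
      = (↑g⁻¹ : M) ^ (2 * m) * (g : M) ^ (2 * m + 1) := by rw [mul_pow, h, pow_mul']
    _ = g := mod_cast congrArg Units.val hunit

theorem inv_pow_mul_odd_pow_of_sq_eq_odd_pow (h : x ^ 2 = (g : M) ^ (2 * m + 1)) :
    ((↑g⁻¹ : M) ^ m * x) ^ (2 * m + 1) = x := by
  rw [pow_succ, pow_mul, inv_pow_mul_sq_of_sq_eq_odd_pow h, ← mul_assoc, ← mul_pow, g.mul_inv,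
    one_pow, one_mul]

end OddPower

theorem eq_pow_mul_of_sq_pow_mul_eq {M : Type*} [Monoid M] {s a b : M} {n d : ℕ}
    (hs : IsLeftRegular s) (h : (s ^ 2) ^ (n + d) * a = s ^ (2 * n + d) * b) :
    b = s ^ d * a := by
  apply hs.pow (2 * n + d)
  calc s ^ (2 * n + d) * b = (s ^ 2) ^ (n + d) * a := h.symm
    _ = s ^ (2 * n + d) * (s ^ d * a) := by
      rw [← mul_assoc, ← pow_add, ← pow_mul]
      congr 2
      lia

theorem odd_resolution_general {M : Type*} [CommMonoid M] (m : ℕ) (g : Mˣ) (e : ℕ → M)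
    (he0 : e 0 = 1)
    (hrec : ∀ i ≤ m, (g : M) ^ (2 * m + 1 - i) * e i = e (2 * m + 1) * e (2 * m + 1 - i)) :
    ((↑g⁻¹ : M) ^ m * e (2 * m + 1)) ^ 2 = g ∧
    e (2 * m + 1) = ((↑g⁻¹ : M) ^ m * e (2 * m + 1)) ^ (2 * m + 1) ∧
    ∀ i ≤ m, e (m + 1 + i) =
      ((↑g⁻¹ : M) ^ m * e (2 * m + 1)) ^ (2 * i + 1) * e (m - i) := by
  have hsq : e (2 * m + 1) ^ 2 = (g : M) ^ (2 * m + 1) := by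
    simpa [he0, sq] using (hrec 0 m.zero_le).symm
  have hs_sq := inv_pow_mul_sq_of_sq_eq_odd_pow hsq
  have hs_pow := inv_pow_mul_odd_pow_of_sq_eq_odd_pow hsq
  set s := (↑g⁻¹ : M) ^ m * e (2 * m + 1)
  have hs : IsLeftRegular s :=
    ((isUnit_pow_iff two_ne_zero).mp (hs_sq ▸ g.isUnit)).isRegular.left
  refine ⟨hs_sq, hs_pow.symm, fun i hi => eq_pow_mul_of_sq_pow_mul_eq (n := m - i) hs ?_⟩
  have hlow : m - i + (2 * i + 1) = m + 1 + i := by lia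
  have htop : 2 * (m - i) + (2 * i + 1) = 2 * m + 1 := by lia
  have hreflect : 2 * m + 1 - (m - i) = m + 1 + i := by lia
  simpa only [hs_sq, hs_pow, hlow, htop, hreflect] using hrec (m - i) (m.sub_le i)

/-- resolution of the reciprocal relations in the odd case `k = 2ℓ−1`.
If `g` is invertible (with inverse `ginv`), `e₀ = 1` and the reciprocal relations
`g^{k−i}·e_i = e_k·e_{k−i}` hold for `i = 0, …, k−1`, then `s := g^{1−ℓ}·e_{2ℓ−1}`
satisfies `s² = g`, `e_{2ℓ−1} = s^{2ℓ−1}` and `e_{ℓ+i} = s^{2i+1}·e_{ℓ−1−i}`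
for all `i = 0, …, ℓ−1`. -/
theorem odd_resolution
    {C : Type*} [CommRing C] [Algebra ℂ C]
    (ℓ : ℕ) (hℓ : 1 ≤ ℓ) (g ginv : C) (hg : g * ginv = 1) (hg' : ginv * g = 1)
    (e : ℕ → C) (he0 : e 0 = 1)
    (hrec : ∀ i, i < 2 * ℓ - 1 →
      g ^ (2 * ℓ - 1 - i) * e i = e (2 * ℓ - 1) * e (2 * ℓ - 1 - i)) :
    (ginv ^ (ℓ - 1) * e (2 * ℓ - 1)) ^ 2 = g ∧
    e (2 * ℓ - 1) = (ginv ^ (ℓ - 1) * e (2 * ℓ - 1)) ^ (2 * ℓ - 1) ∧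
    ∀ i, i ≤ ℓ - 1 →
      e (ℓ + i) = (ginv ^ (ℓ - 1) * e (2 * ℓ - 1)) ^ (2 * i + 1) * e (ℓ - 1 - i) := by
  obtain ⟨m, rfl⟩ := Nat.exists_eq_add_of_le' hℓ
  exact odd_resolution_general m ⟨g, ginv, hg, hg'⟩ e he0 fun i hi => hrec i (by lia)
end

section
/- Let W be a unital associative ℂ-algebra containing elements σ₁,…,σ_{2j−1} satisfying the BMW relations with parameters q, μ. Then a^{(j)↑j}·c^{(2j)} = a^{(j)}·c^{(2j)} in W, where x^{↑p} denotes the shift of indices of generators by p (σ_i ↦ σ_{i+p}, κ_i ↦ κ_{i+p}). -/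
noncomputable section

/-- q-number `(i)_q`. -/
def qnum (q : ℂ) (i : ℕ) : ℂ := (q ^ i - q⁻¹ ^ i) / (q - q⁻¹)

/-- `η = (q−μ)(q⁻¹+μ)/(μ(q−q⁻¹))`. -/
def etaC (q μ : ℂ) : ℂ := (q - μ) * (q⁻¹ + μ) / (μ * (q - q⁻¹))

variable {W : Type*}

/-- `κ_i = (q−σ_i)(q⁻¹+σ_i)/(μ(q−q⁻¹))`. -/
def kap (q μ : ℂ) [Ring W] [Algebra ℂ W] (σ : ℕ → W) (i : ℕ) : W :=
  (μ * (q - q⁻¹))⁻¹ • ((algebraMap ℂ W q - σ i) * (algebraMap ℂ W q⁻¹ + σ i))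

/-- Baxterized element `σ_i⁻(x)`. -/
def sMinus (q μ : ℂ) [Ring W] [Algebra ℂ W] (σ : ℕ → W) (i : ℕ) (x : ℂ) : W :=
  1 + ((x - 1) / (q - q⁻¹)) • σ i + (μ * (x - 1) / (μ + q * x)) • kap q μ σ i

/-- q-antisymmetrizer `a^{(m)↑p}` (shifted by `p`, using the generators
`σ_{p+1}, …, σ_{p+m−1}`):  `aW q μ σ p m = a^{(m)↑p}`. -/
def aW (q μ : ℂ) [Ring W] [Algebra ℂ W] (σ : ℕ → W) (p : ℕ) : ℕ → W
  | 0 => 1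
  | 1 => 1
  | (m + 2) =>
      (q ^ (m + 1) / qnum q (m + 2)) •
        (aW q μ σ p (m + 1) * sMinus q μ σ (p + m + 1) ((q ^ (2 * (m + 1)))⁻¹) *
          aW q μ σ p (m + 1))

/-- Contractor `c^{(2i)↑p}` (shifted by `p`):  `cW q μ σ p i = c^{(2i)↑p}`. -/
def cW (q μ : ℂ) [Ring W] [Algebra ℂ W] (σ : ℕ → W) : ℕ → ℕ → W
  | _, 0 => 1
  | p, 1 => (etaC q μ)⁻¹ • kap q μ σ (p + 1)
  | p, (i + 2) =>
      cW q μ σ (p + 1) (i + 1) * kap q μ σ (p + 1) * kap q μ σ (p + 2 * i + 3) *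
        cW q μ σ (p + 1) (i + 1)

/-- The elements `σ₁, …, σ_{n−1}` (with inverses `σi`) satisfy the BMW relations with
parameters `q`, `μ`. -/
def BMWrels (q μ : ℂ) [Ring W] [Algebra ℂ W] (n : ℕ) (σ σi : ℕ → W) : Prop :=
  (∀ i, 1 ≤ i → i ≤ n - 1 → σ i * σi i = 1 ∧ σi i * σ i = 1) ∧
  (∀ i, 1 ≤ i → i + 1 ≤ n - 1 → σ i * σ (i + 1) * σ i = σ (i + 1) * σ i * σ (i + 1)) ∧
  (∀ i j, 1 ≤ i → i ≤ n - 1 → 1 ≤ j → j ≤ n - 1 → i + 1 < j → σ i * σ j = σ j * σ i) ∧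
  (∀ i, 1 ≤ i → i ≤ n - 1 →
    σ i * kap q μ σ i = μ • kap q μ σ i ∧
    kap q μ σ i * σ i = μ • kap q μ σ i ∧
    kap q μ σ i * kap q μ σ i = etaC q μ • kap q μ σ i) ∧
  (∀ i, 1 ≤ i → i + 1 ≤ n - 1 →
    kap q μ σ i * kap q μ σ (i + 1) * kap q μ σ i = kap q μ σ i ∧
    kap q μ σ (i + 1) * kap q μ σ i * kap q μ σ (i + 1) = kap q μ σ (i + 1) ∧
    (∀ τ τ' : ℕ → W, (τ = σ ∧ τ' = σi) ∨ (τ = σi ∧ τ' = σ) →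
      kap q μ σ i * τ (i + 1) = kap q μ σ i * kap q μ σ (i + 1) * τ' i ∧
      kap q μ σ (i + 1) * τ i = kap q μ σ (i + 1) * kap q μ σ i * τ' (i + 1) ∧
      τ (i + 1) * kap q μ σ i = τ' i * kap q μ σ (i + 1) * kap q μ σ i ∧
      τ i * kap q μ σ (i + 1) = τ' (i + 1) * kap q μ σ i * kap q μ σ (i + 1)))

/-!
The antisymmetrizer `a^{(m)}` absorbs each of its generators with the eigenvalue `-q⁻¹`. For the
last generator one writes `a^{(m)}` through `a^{(m-1)}` and uses the Yang–Baxter equation to move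
a factor `σ⁻(q⁻²)`, which absorbs its own generator, to the right.

The contractor satisfies the sliding relations `σ_{j+r} c^{(2j)} = σ_{j-r} c^{(2j)}` for
`0 < r < j`. Its recursion makes every relation but the outermost one, `r = j - 1`, a relation
inside `c^{(2j-2)↑1}`. For the outermost one with `j ≥ 4`, the products `κ₃κ₂κ₁`
and `κ_{2j-3}κ_{2j-2}κ_{2j-1}` split off from `c^{(2j)}`: they carry `σ₁` and `σ_{2j-1}` to `σ₃`
and `σ_{2j-3}`, which the outermost relation for `c^{(2j-4)↑2}` identifies.

Hence every generator of `a^{(j)}` or of `a^{(j)↑j}` acts on `a^{(j)↑j} c^{(2j)}`, respectively on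
`a^{(j)} c^{(2j)}`, as `-q⁻¹`, so that each antisymmetrizer fixes the product of the other one
with `c^{(2j)}`. Since the two commute, the products are equal.
-/

theorem sq_sub_one_ne_zero {K : Type*} [Field K] {x : K} (hx : x - x⁻¹ ≠ 0) : x ^ 2 - 1 ≠ 0 := by
  have hx0 : x ≠ 0 := by
    rintro rfl
    simp at hx
  rw [sq, ← mul_inv_cancel₀ hx0, ← mul_sub]
  exact mul_ne_zero hx0 hx

section Commutation

variable [Ring W] [Algebra ℂ W] {σ : ℕ → W} {x : W}

theorem commute_kap (q μ : ℂ) {i : ℕ} (h : Commute x (σ i)) : Commute x (kap q μ σ i) :=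
  (((Algebra.commute_algebraMap_right q x).sub_right h).mul_right
    ((Algebra.commute_algebraMap_right q⁻¹ x).add_right h)).smul_right _

theorem commute_sMinus (q μ : ℂ) {i : ℕ} (h : Commute x (σ i)) (y : ℂ) :
    Commute x (sMinus q μ σ i y) :=
  ((Commute.one_right x).add_right (h.smul_right _)).add_right ((commute_kap q μ h).smul_right _)

theorem commute_aW (q μ : ℂ) (p : ℕ) :
    ∀ m, (∀ i, p < i → i < p + m → Commute x (σ i)) → Commute x (aW q μ σ p m)
  | 0, _ => Commute.one_right x
  | 1, _ => Commute.one_right x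
  | m + 2, h => by
    have ih := commute_aW q μ p (m + 1) fun i hi hi' => h i hi (by omega)
    have hS := commute_sMinus q μ (h (p + m + 1) (by omega) (by omega)) (q ^ (2 * (m + 1)))⁻¹
    rw [aW]
    exact ((ih.mul_right hS).mul_right ih).smul_right _

theorem commute_cW (q μ : ℂ) :
    ∀ p i, (∀ r, p < r → r < p + 2 * i → Commute x (σ r)) → Commute x (cW q μ σ p i)
  | _, 0, _ => Commute.one_right x
  | _, 1, h => (commute_kap q μ (h _ (by omega) (by omega))).smul_right _
  | p, i + 2, h => by
    have ih := commute_cW q μ (p + 1) (i + 1) fun r hr hr' => h r (by omega) (by omega)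
    rw [cW]
    exact ((ih.mul_right (commute_kap q μ (h _ (by omega) (by omega)))).mul_right
      (commute_kap q μ (h _ (by omega) (by omega)))).mul_right ih

end Commutation

/-- The indices of two neighbouring generators among `σ₁, …, σ_{n−1}`. -/
abbrev Adjacent (n i j : ℕ) : Prop :=
  1 ≤ i ∧ i < n ∧ 1 ≤ j ∧ j < n ∧ (i + 1 = j ∨ j + 1 = i)

/-- The indices of two generators among `σ₁, …, σ_{n−1}` that are neither equal nor
neighbours. -/
abbrev FarApart (n i j : ℕ) : Prop :=
  1 ≤ i ∧ i < n ∧ 1 ≤ j ∧ j < n ∧ (i + 1 < j ∨ j + 1 < i)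

section Relations

variable [Ring W] [Algebra ℂ W] {q μ : ℂ} {σ σi : ℕ → W} {n i j : ℕ}

local notation "κ" => kap q μ σ

theorem gen_mul_self (hq : q ≠ 0) (hl : q - q⁻¹ ≠ 0) (hμ : μ ≠ 0) (i : ℕ) :
    σ i * σ i = 1 + (q - q⁻¹) • σ i - (μ * (q - q⁻¹)) • κ i := by
  rw [kap, smul_smul, mul_inv_cancel₀ (mul_ne_zero hμ hl), one_smul,
    Algebra.algebraMap_eq_smul_one, Algebra.algebraMap_eq_smul_one]
  simp only [mul_add, sub_mul, smul_mul_assoc, mul_smul_comm, one_mul, mul_one, smul_sub, smul_smul,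
    inv_mul_cancel₀ hq]
  module

namespace BMWrels

theorem gen_mul_inv (h : BMWrels q μ n σ σi) (hi : 1 ≤ i ∧ i < n := by omega) :
    σ i * σi i = 1 :=
  (h.1 i (by omega) (by omega)).1

theorem inv_mul_gen (h : BMWrels q μ n σ σi) (hi : 1 ≤ i ∧ i < n := by omega) :
    σi i * σ i = 1 :=
  (h.1 i (by omega) (by omega)).2

theorem gen_mul_kap_self (h : BMWrels q μ n σ σi) (hi : 1 ≤ i ∧ i < n := by omega) :
    σ i * κ i = μ • κ i :=
  (h.2.2.2.1 i (by omega) (by omega)).1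

theorem kap_mul_gen_self (h : BMWrels q μ n σ σi) (hi : 1 ≤ i ∧ i < n := by omega) :
    κ i * σ i = μ • κ i :=
  (h.2.2.2.1 i (by omega) (by omega)).2.1

theorem kap_mul_kap_self (h : BMWrels q μ n σ σi) (hi : 1 ≤ i ∧ i < n := by omega) :
    κ i * κ i = etaC q μ • κ i :=
  (h.2.2.2.1 i (by omega) (by omega)).2.2

theorem braid (h : BMWrels q μ n σ σi) (hij : Adjacent n i j := by omega) :
    σ i * σ j * σ i = σ j * σ i * σ j := by
  obtain ⟨_, _, _, _, rfl | rfl⟩ := hij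
  · exact h.2.1 i (by omega) (by omega)
  · exact (h.2.1 j (by omega) (by omega)).symm

theorem commute_gen (h : BMWrels q μ n σ σi) (hij : FarApart n i j := by omega) :
    Commute (σ i) (σ j) := by
  obtain ⟨_, _, _, _, hlt | hlt⟩ := hij
  · exact h.2.2.1 i j (by omega) (by omega) (by omega) (by omega) hlt
  · exact (h.2.2.1 j i (by omega) (by omega) (by omega) (by omega) hlt).symm

theorem commute_gen_kap (h : BMWrels q μ n σ σi) (hij : FarApart n i j := by omega) :
    Commute (σ i) (κ j) :=
  commute_kap q μ h.commute_gen

theorem commute_kap_kap (h : BMWrels q μ n σ σi) (hij : FarApart n i j := by omega) :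
    Commute (κ i) (κ j) :=
  commute_kap q μ (h.commute_gen_kap (by omega)).symm

theorem kap_mul_kap_mul_kap (h : BMWrels q μ n σ σi) (hij : Adjacent n i j := by omega) :
    κ i * κ j * κ i = κ i := by
  obtain ⟨_, _, _, _, rfl | rfl⟩ := hij
  · exact (h.2.2.2.2 i (by omega) (by omega)).1
  · exact (h.2.2.2.2 j (by omega) (by omega)).2.1

theorem kap_mul_gen (h : BMWrels q μ n σ σi) (hij : Adjacent n i j := by omega) :
    κ i * σ j = κ i * κ j * σi i := by
  obtain ⟨_, _, _, _, rfl | rfl⟩ := hij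
  · exact ((h.2.2.2.2 i (by omega) (by omega)).2.2 σ σi (.inl ⟨rfl, rfl⟩)).1
  · exact ((h.2.2.2.2 j (by omega) (by omega)).2.2 σ σi (.inl ⟨rfl, rfl⟩)).2.1

theorem kap_mul_inv (h : BMWrels q μ n σ σi) (hij : Adjacent n i j := by omega) :
    κ i * σi j = κ i * κ j * σ i := by
  obtain ⟨_, _, _, _, rfl | rfl⟩ := hij
  · exact ((h.2.2.2.2 i (by omega) (by omega)).2.2 σi σ (.inr ⟨rfl, rfl⟩)).1
  · exact ((h.2.2.2.2 j (by omega) (by omega)).2.2 σi σ (.inr ⟨rfl, rfl⟩)).2.1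

theorem gen_mul_kap (h : BMWrels q μ n σ σi) (hij : Adjacent n i j := by omega) :
    σ j * κ i = σi i * κ j * κ i := by
  obtain ⟨_, _, _, _, rfl | rfl⟩ := hij
  · exact ((h.2.2.2.2 i (by omega) (by omega)).2.2 σ σi (.inl ⟨rfl, rfl⟩)).2.2.1
  · exact ((h.2.2.2.2 j (by omega) (by omega)).2.2 σ σi (.inl ⟨rfl, rfl⟩)).2.2.2

theorem inv_mul_kap (h : BMWrels q μ n σ σi) (hij : Adjacent n i j := by omega) :
    σi j * κ i = σ i * κ j * κ i := by
  obtain ⟨_, _, _, _, rfl | rfl⟩ := hij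
  · exact ((h.2.2.2.2 i (by omega) (by omega)).2.2 σi σ (.inr ⟨rfl, rfl⟩)).2.2.1
  · exact ((h.2.2.2.2 j (by omega) (by omega)).2.2 σi σ (.inr ⟨rfl, rfl⟩)).2.2.2

theorem inv_mul_kap_self (h : BMWrels q μ n σ σi) (hμ : μ ≠ 0)
    (hi : 1 ≤ i ∧ i < n := by omega) : σi i * κ i = μ⁻¹ • κ i := by
  rw [eq_inv_smul_iff₀ hμ, ← mul_smul_comm, ← h.gen_mul_kap_self, ← mul_assoc, h.inv_mul_gen,
    one_mul]

theorem inv_eq (h : BMWrels q μ n σ σi) (hq : q ≠ 0) (hl : q - q⁻¹ ≠ 0) (hμ : μ ≠ 0)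
    (hi : 1 ≤ i ∧ i < n := by omega) :
    σi i = σ i - (q - q⁻¹) • (1 : W) + (q - q⁻¹) • κ i := by
  have hsq : σi i * (σ i * σ i) = 1 * σ i := by rw [← mul_assoc, h.inv_mul_gen]
  have hcancel : μ * (q - q⁻¹) * μ⁻¹ = q - q⁻¹ := by field_simp
  rw [gen_mul_self hq hl hμ, mul_sub, mul_add, mul_one, mul_smul_comm, mul_smul_comm,
    h.inv_mul_gen, h.inv_mul_kap_self hμ, smul_smul, hcancel, one_mul] at hsq
  rw [← hsq]
  abel

theorem kap_mul_gen_mul_kap (h : BMWrels q μ n σ σi) (hμ : μ ≠ 0)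
    (hij : Adjacent n i j := by omega) : κ i * σ j * κ i = μ⁻¹ • κ i := by
  rw [h.kap_mul_gen, mul_assoc, h.inv_mul_kap_self hμ, mul_smul_comm, h.kap_mul_kap_mul_kap]

theorem gen_mul_gen_mul_kap (h : BMWrels q μ n σ σi) (hij : Adjacent n i j := by omega) :
    σ i * σ j * κ i = κ j * κ i := by
  rw [mul_assoc, h.gen_mul_kap, ← mul_assoc, ← mul_assoc, h.gen_mul_inv, one_mul]

theorem kap_mul_gen_mul_gen (h : BMWrels q μ n σ σi) (hij : Adjacent n i j := by omega) :
    κ i * σ j * σ i = κ i * κ j := by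
  rw [h.kap_mul_gen, mul_assoc, h.inv_mul_gen, mul_one]

theorem kap_mul_kap_mul_gen (h : BMWrels q μ n σ σi) (hq : q ≠ 0) (hl : q - q⁻¹ ≠ 0)
    (hμ : μ ≠ 0) (hij : Adjacent n i j := by omega) :
    κ i * κ j * σ i = κ i * σ j + (q - q⁻¹) • (κ i * κ j) - (q - q⁻¹) • κ i := by
  rw [← h.kap_mul_inv, h.inv_eq hq hl hμ, mul_add, mul_sub, mul_smul_comm, mul_smul_comm, mul_one]
  abel

theorem gen_mul_kap_mul_kap (h : BMWrels q μ n σ σi) (hq : q ≠ 0) (hl : q - q⁻¹ ≠ 0)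
    (hμ : μ ≠ 0) (hij : Adjacent n i j := by omega) :
    σ i * κ j * κ i = σ j * κ i + (q - q⁻¹) • (κ j * κ i) - (q - q⁻¹) • κ i := by
  rw [← h.inv_mul_kap, h.inv_eq hq hl hμ, add_mul, sub_mul, smul_mul_assoc, smul_mul_assoc, one_mul]
  abel

theorem gen_mul_kap_mul_gen (h : BMWrels q μ n σ σi) (hq : q ≠ 0) (hl : q - q⁻¹ ≠ 0)
    (hμ : μ ≠ 0) (hij : Adjacent n i j := by omega) :
    σ j * κ i * σ j = σ i * κ j * σ i - (q - q⁻¹) • (σ i * κ j + κ j * σ i)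
      + (q - q⁻¹) • (σ j * κ i + κ i * σ j) + (q - q⁻¹) ^ 2 • (κ j - κ i) := by
  have hconj : σ j * κ i * σ j = σi i * κ j * σi i := by
    rw [h.gen_mul_kap, mul_assoc, mul_assoc, ← mul_assoc (κ j), ← h.kap_mul_inv, mul_assoc]
  rw [hconj, h.inv_eq hq hl hμ]
  simp only [mul_add, mul_sub, add_mul, sub_mul, smul_mul_assoc, mul_smul_comm, one_mul, mul_one,
    h.kap_mul_kap_mul_gen hq hl hμ hij, h.gen_mul_kap_mul_kap hq hl hμ hij,
    h.kap_mul_kap_mul_kap hij]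
  module

-- The rewrite rules below reduce both sides to combinations of reduced words in two neighbours.
theorem yang_baxter (h : BMWrels q μ n σ σi) (hq : q ≠ 0) (hl : q - q⁻¹ ≠ 0) (hμ : μ ≠ 0)
    {x y : ℂ} (hx : μ + q * x ≠ 0) (hy : μ + q * y ≠ 0) (hxy : μ + q * (x * y) ≠ 0)
    (hij : Adjacent n i j := by omega) :
    sMinus q μ σ i x * sMinus q μ σ j (x * y) * sMinus q μ σ i y =
      sMinus q μ σ j y * sMinus q μ σ i (x * y) * sMinus q μ σ j x := by
  have hji : Adjacent n j i := by omega
  have hl2 := sq_sub_one_ne_zero hl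
  simp only [sMinus, mul_add, add_mul, smul_mul_assoc, mul_smul_comm, one_mul, mul_one, smul_add,
    gen_mul_self (σ := σ) hq hl hμ, h.gen_mul_kap_self (i := i), h.gen_mul_kap_self (i := j),
    h.kap_mul_gen_self (i := i), h.kap_mul_gen_self (i := j),
    h.kap_mul_kap_self (i := i), h.kap_mul_kap_self (i := j), h.braid hij,
    h.kap_mul_kap_mul_kap hij, h.kap_mul_kap_mul_kap hji,
    h.kap_mul_kap_mul_gen hq hl hμ hij, h.kap_mul_kap_mul_gen hq hl hμ hji,
    h.gen_mul_kap_mul_kap hq hl hμ hij, h.gen_mul_kap_mul_kap hq hl hμ hji,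
    h.kap_mul_gen_mul_kap hμ hij, h.kap_mul_gen_mul_kap hμ hji,
    h.gen_mul_gen_mul_kap hij, h.gen_mul_gen_mul_kap hji,
    h.kap_mul_gen_mul_gen hij, h.kap_mul_gen_mul_gen hji,
    h.gen_mul_kap_mul_gen hq hl hμ hij, etaC]
  generalize κ i = k, κ j = l, σ i = s, σ j = t
  generalize hX : μ + q * x = X at hx ⊢
  generalize hY : μ + q * y = Y at hy ⊢
  generalize hZ : μ + q * (x * y) = Z at hxy ⊢
  match_scalars <;> field_simp <;> subst X Y Z <;> ring1

end BMWrels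

end Relations

section Antisymmetrizers

variable [Ring W] [Algebra ℂ W] {q μ : ℂ} {σ σi : ℕ → W} {n : ℕ}

theorem inv_pow_mul_qnum (hq : q ≠ 0) (hl : q - q⁻¹ ≠ 0) (m : ℕ) :
    (q ^ m)⁻¹ * qnum q (m + 1) = 1 - ((q ^ (2 * m))⁻¹ - 1) / (q - q⁻¹) * q⁻¹ := by
  have hl2 := sq_sub_one_ne_zero hl
  rw [qnum, inv_pow]
  field_simp
  ring

theorem sMinus_mul_of_gen_mul {i : ℕ} {z : W} (hz : σ i * z = (-q⁻¹) • z) (x : ℂ) :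
    sMinus q μ σ i x * z = (1 - (x - 1) / (q - q⁻¹) * q⁻¹) • z := by
  have hroot : (algebraMap ℂ W q⁻¹ + σ i) * z = 0 := by
    rw [add_mul, ← Algebra.smul_def, hz]
    module
  have hkap : kap q μ σ i * z = 0 := by
    rw [kap, smul_mul_assoc, mul_assoc, hroot, mul_zero, smul_zero]
  rw [sMinus, add_mul, add_mul, smul_mul_assoc, smul_mul_assoc, hkap, hz, one_mul]
  module

theorem mul_sMinus_of_mul_gen {i : ℕ} {z : W} (hz : z * σ i = (-q⁻¹) • z) (x : ℂ) :
    z * sMinus q μ σ i x = (1 - (x - 1) / (q - q⁻¹) * q⁻¹) • z := by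
  have hsub : z * (algebraMap ℂ W q - σ i) = (q + q⁻¹) • z := by
    rw [mul_sub, ← Algebra.commutes, ← Algebra.smul_def, hz]
    module
  have hroot : z * (algebraMap ℂ W q⁻¹ + σ i) = 0 := by
    rw [mul_add, ← Algebra.commutes, ← Algebra.smul_def, hz]
    module
  have hkap : z * kap q μ σ i = 0 := by
    rw [kap, mul_smul_comm, ← mul_assoc, hsub, smul_mul_assoc, hroot, smul_zero, smul_zero]
  rw [sMinus, mul_add, mul_add, mul_smul_comm, mul_smul_comm, hkap, hz, mul_one]
  module

theorem aW_mul_of_gen_mul (hq : q ≠ 0) (hl : q - q⁻¹ ≠ 0) {p : ℕ} {z : W} :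
    ∀ m, (∀ k, 2 ≤ k → k ≤ m → qnum q k ≠ 0) →
      (∀ i, p < i → i < p + m → σ i * z = (-q⁻¹) • z) → aW q μ σ p m * z = z
  | 0, _, _ => one_mul z
  | 1, _, _ => one_mul z
  | m + 2, hnum, hz => by
    have ih : aW q μ σ p (m + 1) * z = z :=
      aW_mul_of_gen_mul hq hl (m + 1) (fun k hk hk' => hnum k hk (by omega))
        fun i hi hi' => hz i hi (by omega)
    have hscal : q ^ (m + 1) / qnum q (m + 2) * ((q ^ (m + 1))⁻¹ * qnum q (m + 2)) = 1 := by
      have := hnum (m + 2) (by omega) le_rfl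
      field_simp
    rw [aW, smul_mul_assoc, mul_assoc, mul_assoc, ih,
      sMinus_mul_of_gen_mul (hz _ (by omega) (by omega)), ← inv_pow_mul_qnum hq hl, mul_smul_comm,
      ih, smul_smul, hscal, one_smul]

theorem mul_aW_of_mul_gen (hq : q ≠ 0) (hl : q - q⁻¹ ≠ 0) {p : ℕ} {z : W} :
    ∀ m, (∀ k, 2 ≤ k → k ≤ m → qnum q k ≠ 0) →
      (∀ i, p < i → i < p + m → z * σ i = (-q⁻¹) • z) → z * aW q μ σ p m = z
  | 0, _, _ => mul_one z
  | 1, _, _ => mul_one z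
  | m + 2, hnum, hz => by
    have ih : z * aW q μ σ p (m + 1) = z :=
      mul_aW_of_mul_gen hq hl (m + 1) (fun k hk hk' => hnum k hk (by omega))
        fun i hi hi' => hz i hi (by omega)
    have hscal : q ^ (m + 1) / qnum q (m + 2) * ((q ^ (m + 1))⁻¹ * qnum q (m + 2)) = 1 := by
      have := hnum (m + 2) (by omega) le_rfl
      field_simp
    rw [aW, mul_smul_comm, ← mul_assoc, ← mul_assoc, ih,
      mul_sMinus_of_mul_gen (hz _ (by omega) (by omega)), ← inv_pow_mul_qnum hq hl, smul_mul_assoc,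
      ih, smul_smul, hscal, one_smul]

namespace BMWrels

theorem commute_gen_aW (h : BMWrels q μ n σ σi) {p m r : ℕ} (hn : p + m ≤ n := by omega)
    (hr : 1 ≤ r ∧ r < n ∧ (r < p ∨ p + m < r) := by omega) : Commute (σ r) (aW q μ σ p m) :=
  commute_aW q μ p m fun _ _ _ => h.commute_gen

theorem sMinus_mul_gen (h : BMWrels q μ n σ σi) (hq : q ≠ 0) (hl : q - q⁻¹ ≠ 0) (hμ : μ ≠ 0)
    (hpole : μ + q * (q ^ 2)⁻¹ ≠ 0) {i : ℕ} (hi : 1 ≤ i ∧ i < n := by omega) :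
    sMinus q μ σ i (q ^ 2)⁻¹ * σ i = (-q⁻¹) • sMinus q μ σ i (q ^ 2)⁻¹ := by
  have hl2 := sq_sub_one_ne_zero hl
  rw [sMinus, add_mul, add_mul, smul_mul_assoc, smul_mul_assoc, one_mul, gen_mul_self hq hl hμ,
    h.kap_mul_gen_self]
  have hpole' : q * μ + 1 ≠ 0 := fun h0 => hpole (by field_simp; linear_combination h0)
  match_scalars <;> field_simp <;> ring1

theorem sMinus_fusion (h : BMWrels q μ n σ σi) (hq : q ≠ 0) (hl : q - q⁻¹ ≠ 0) (hμ : μ ≠ 0)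
    {i j m : ℕ} (hpole : ∀ k, 1 ≤ k → k ≤ m + 1 → μ + q * (q ^ (2 * k))⁻¹ ≠ 0)
    (hm : 1 ≤ m) (hij : Adjacent n i j := by omega) :
    sMinus q μ σ i (q ^ 2)⁻¹ * sMinus q μ σ j (q ^ (2 * (m + 1)))⁻¹ *
        sMinus q μ σ i (q ^ (2 * m))⁻¹ =
      sMinus q μ σ j (q ^ (2 * m))⁻¹ * sMinus q μ σ i (q ^ (2 * (m + 1)))⁻¹ *
        sMinus q μ σ j (q ^ 2)⁻¹ := by
  have hmul : (q ^ (2 * (m + 1)))⁻¹ = (q ^ 2)⁻¹ * (q ^ (2 * m))⁻¹ := by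
    rw [← mul_inv, ← pow_add, mul_add_one, add_comm]
  rw [hmul]
  exact h.yang_baxter hq hl hμ (hpole 1 le_rfl (by omega)) (hpole m hm (by omega))
    (hmul ▸ hpole (m + 1) (by omega) le_rfl)

-- Up to scalars `a^{(m+3)} = b S b`, `b = a T a` and `b = b U`; as `a` commutes with `S`, this
-- gives `b (U S T) a`, and the Yang–Baxter equation `U S T = Y X V` exposes `V` next to `a`.
theorem exists_aW_eq_mul_sMinus_mul_aW (h : BMWrels q μ n σ σi) (hq : q ≠ 0) (hl : q - q⁻¹ ≠ 0)
    (hμ : μ ≠ 0) {p m : ℕ} (hn : p + m + 3 ≤ n) (hnum : ∀ k, 2 ≤ k → k ≤ m + 2 → qnum q k ≠ 0)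
    (hpole : ∀ k, 1 ≤ k → k ≤ m + 2 → μ + q * (q ^ (2 * k))⁻¹ ≠ 0)
    (habs : ∀ i, p < i → i < p + m + 2 →
      aW q μ σ p (m + 2) * σ i = (-q⁻¹) • aW q μ σ p (m + 2)) :
    ∃ w, aW q μ σ p (m + 3) =
      w * sMinus q μ σ (p + m + 2) (q ^ 2)⁻¹ * aW q μ σ p (m + 1) := by
  set a := aW q μ σ p (m + 1)
  set b := aW q μ σ p (m + 2)
  set S := sMinus q μ σ (p + m + 2) (q ^ (2 * (m + 2)))⁻¹
  set T := sMinus q μ σ (p + m + 1) (q ^ (2 * (m + 1)))⁻¹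
  set U := sMinus q μ σ (p + m + 1) (q ^ 2)⁻¹
  set V := sMinus q μ σ (p + m + 2) (q ^ 2)⁻¹
  set X := sMinus q μ σ (p + m + 1) (q ^ (2 * (m + 2)))⁻¹
  set Y := sMinus q μ σ (p + m + 2) (q ^ (2 * (m + 1)))⁻¹
  have hb : b = (q ^ (m + 1) / qnum q (m + 2)) • (a * T * a) := rfl
  have hba : b * a = b :=
    mul_aW_of_mul_gen hq hl (m + 1) (fun k hk hk' => hnum k hk (by omega))
      fun i hi hi' => habs i hi (by omega)
  have hbU : b = ((q ^ 1)⁻¹ * qnum q 2)⁻¹ • (b * U) := by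
    have hne : (q ^ 1)⁻¹ * qnum q 2 ≠ 0 :=
      mul_ne_zero (inv_ne_zero (pow_ne_zero 1 hq)) (hnum 2 le_rfl (by omega))
    rw [eq_inv_smul_iff₀ hne, inv_pow_mul_qnum hq hl,
      mul_sMinus_of_mul_gen (habs _ (by omega) (by omega))]
  have haS : Commute a S :=
    commute_sMinus q μ h.commute_gen_aW.symm _
  have hbSb : b * S * b = (q ^ (m + 1) / qnum q (m + 2)) • (b * (S * T) * a) := by
    nth_rw 2 [hb]
    simp only [mul_smul_comm, ← mul_assoc]
    rw [mul_assoc b, ← haS.eq, ← mul_assoc, hba]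
  have hfuse : b * (S * T) * a = ((q ^ 1)⁻¹ * qnum q 2)⁻¹ • (b * (Y * X) * V * a) := by
    have hUST : U * S * T = Y * X * V := h.sMinus_fusion hq hl hμ hpole (by omega)
    nth_rw 1 [hbU]
    rw [smul_mul_assoc, smul_mul_assoc, mul_assoc b, ← mul_assoc U, hUST, ← mul_assoc b]
  refine ⟨(q ^ (m + 2) / qnum q (m + 3)) • (q ^ (m + 1) / qnum q (m + 2)) •
    ((q ^ 1)⁻¹ * qnum q 2)⁻¹ • (b * (Y * X)), ?_⟩
  change (q ^ (m + 2) / qnum q (m + 3)) • (b * S * b) = _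
  simp only [hbSb, hfuse, smul_mul_assoc]

theorem aW_mul_gen (h : BMWrels q μ n σ σi) (hq : q ≠ 0) (hl : q - q⁻¹ ≠ 0) (hμ : μ ≠ 0)
    {p : ℕ} : ∀ m, p + m ≤ n → (∀ k, 2 ≤ k → k ≤ m → qnum q k ≠ 0) →
      (∀ k, 1 ≤ k → k < m → μ + q * (q ^ (2 * k))⁻¹ ≠ 0) →
      ∀ i, p < i → i < p + m → aW q μ σ p m * σ i = (-q⁻¹) • aW q μ σ p m
  | 0, _, _, _, i, hi, hi' | 1, _, _, _, i, hi, hi' => by omega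
  | 2, hn, _, hpole, i, hi, hi' => by
    obtain rfl : i = p + 1 := by omega
    simp only [aW, one_mul, mul_one, smul_mul_assoc, smul_comm (-q⁻¹)]
    rw [h.sMinus_mul_gen hq hl hμ (hpole 1 le_rfl one_lt_two)]
  | m + 3, hn, hnum, hpole, i, hi, hi' => by
    have ih := aW_mul_gen h hq hl hμ (p := p) (m + 2) (by omega)
      (fun k hk hk' => hnum k hk (by omega)) fun k hk hk' => hpole k hk (by omega)
    obtain hlt | rfl : i < p + m + 2 ∨ i = p + m + 2 := by omega
    · rw [aW, smul_mul_assoc, mul_assoc, ih i hi hlt, mul_smul_comm, smul_comm]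
    · obtain ⟨w, hw⟩ := h.exists_aW_eq_mul_sMinus_mul_aW hq hl hμ hn
        (fun k hk hk' => hnum k hk (by omega)) (fun k hk hk' => hpole k hk (by omega)) ih
      have hcomm : Commute (σ (p + m + 2)) (aW q μ σ p (m + 1)) := h.commute_gen_aW
      rw [hw, mul_assoc, ← hcomm.eq, ← mul_assoc, mul_assoc w,
        h.sMinus_mul_gen hq hl hμ (hpole 1 le_rfl (by omega)), mul_smul_comm, smul_mul_assoc]

end BMWrels

end Antisymmetrizers

section Contractors

variable [Ring W] [Algebra ℂ W] {q μ : ℂ} {σ σi : ℕ → W} {n p i j k : ℕ}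

local notation "κ" => kap q μ σ

theorem cW_add_two (q μ : ℂ) (σ : ℕ → W) (p i : ℕ) {e f : ℕ} (he : e = p + 1 := by omega)
    (hf : f = p + 2 * i + 3 := by omega) :
    cW q μ σ p (i + 2) =
      cW q μ σ e (i + 1) * (kap q μ σ e * kap q μ σ f) * cW q μ σ e (i + 1) := by
  rw [he, hf, ← mul_assoc]
  rfl

theorem cW_mul_cW_succ (hc : IsIdempotentElem (cW q μ σ (p + 1) i)) :
    cW q μ σ (p + 1) i * cW q μ σ p (i + 1) = cW q μ σ p (i + 1) := by
  cases i with
  | zero => exact one_mul _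
  | succ i => rw [cW_add_two q μ σ p i rfl rfl, ← mul_assoc, ← mul_assoc, hc.eq]

theorem cW_succ_mul_cW (hc : IsIdempotentElem (cW q μ σ (p + 1) i)) :
    cW q μ σ p (i + 1) * cW q μ σ (p + 1) i = cW q μ σ p (i + 1) := by
  cases i with
  | zero => exact mul_one _
  | succ i => rw [cW_add_two q μ σ p i rfl rfl, mul_assoc, hc.eq]

namespace BMWrels

theorem commute_gen_cW (h : BMWrels q μ n σ σi) {r : ℕ} (hn : p + 2 * i ≤ n := by omega)
    (hr : 1 ≤ r ∧ r < n ∧ (r < p ∨ p + 2 * i < r) := by omega) :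
    Commute (σ r) (cW q μ σ p i) :=
  commute_cW q μ p i fun s hs hs' => h.commute_gen

theorem commute_kap_cW (h : BMWrels q μ n σ σi) {r : ℕ} (hn : p + 2 * i ≤ n := by omega)
    (hr : 1 ≤ r ∧ r < n ∧ (r < p ∨ p + 2 * i < r) := by omega) :
    Commute (κ r) (cW q μ σ p i) :=
  commute_cW q μ p i fun s hs hs' => h.commute_gen_kap.symm

theorem kap_mul_kap_mul_cW_mul (h : BMWrels q μ n σ σi) (hη : etaC q μ ≠ 0) {e f : ℕ}
    (hn : p + 2 * (i + 2) ≤ n) (hc : IsIdempotentElem (cW q μ σ (p + 2) i))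
    (he : e = p + 1) (hf : f = p + 2 * i + 3) :
    κ e * κ f * cW q μ σ e (i + 1) * (κ e * κ f) = cW q μ σ (p + 2) i * (κ e * κ f) := by
  have hef : Commute (κ e) (κ f) := h.commute_kap_kap
  cases i with
  | zero =>
    have hkk : κ e * κ f * κ (e + 1) * (κ e * κ f) = etaC q μ • (κ e * κ f) := by
      calc κ e * κ f * κ (e + 1) * (κ e * κ f) = κ f * (κ e * κ (e + 1) * κ e) * κ f := by
            nth_rw 1 [hef.eq]
            simp only [mul_assoc]
        _ = etaC q μ • (κ e * κ f) := by
            rw [h.kap_mul_kap_mul_kap, ← hef.eq, mul_assoc, h.kap_mul_kap_self, mul_smul_comm]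
    rw [cW, cW, one_mul, mul_smul_comm, smul_mul_assoc, hkk, inv_smul_smul₀ hη]
  | succ i =>
    have hfe : Commute (κ f) (κ (p + 2)) := h.commute_kap_kap
    have hff : Commute (κ f * κ (f - 1)) (κ e) := hef.symm.mul_left h.commute_kap_kap
    have hkk : κ e * κ f * (κ (p + 2) * κ (f - 1)) * (κ e * κ f) = κ e * κ f := by
      rw [hfe.mul_mul_mul_comm, hff.mul_mul_mul_comm, h.kap_mul_kap_mul_kap, h.kap_mul_kap_mul_kap]
    rw [cW_add_two q μ σ e i (e := p + 2) (f := f - 1)]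
    set d := cW q μ σ (p + 2) (i + 1)
    have hd : Commute (κ e * κ f) d := h.commute_kap_cW.mul_left h.commute_kap_cW
    calc κ e * κ f * (d * (κ (p + 2) * κ (f - 1)) * d) * (κ e * κ f)
        = d * (κ e * κ f * (κ (p + 2) * κ (f - 1)) * (κ e * κ f)) * d := by
          rw [mul_assoc d, ← mul_assoc _ d, hd.eq, mul_assoc d, mul_assoc d, ← mul_assoc _ _ d,
            mul_assoc _ d, ← hd.eq]
          simp only [mul_assoc]
      _ = d * (κ e * κ f) := by rw [hkk, mul_assoc, hd.eq, ← mul_assoc, hc.eq]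

theorem isIdempotentElem_cW (h : BMWrels q μ n σ σi) (hη : etaC q μ ≠ 0) :
    ∀ p i, p + 2 * i ≤ n → IsIdempotentElem (cW q μ σ p i)
  | _, 0, _ => IsIdempotentElem.one
  | p, 1, hn => by
    rw [IsIdempotentElem, cW, smul_mul_smul_comm, h.kap_mul_kap_self, smul_smul, mul_assoc,
      inv_mul_cancel₀ hη, mul_one]
  | p, i + 2, hn => by
    have hb := h.isIdempotentElem_cW hη (p + 1) (i + 1) (by omega)
    have hd := h.isIdempotentElem_cW hη (p + 2) i (by omega)
    rw [IsIdempotentElem, cW_add_two q μ σ p i rfl rfl]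
    set b := cW q μ σ (p + 1) (i + 1)
    set K := κ (p + 1) * κ (p + 2 * i + 3)
    calc b * K * b * (b * K * b) = b * (K * (b * b) * K) * b := by simp only [mul_assoc]
      _ = b * K * b := by
        rw [hb.eq, h.kap_mul_kap_mul_cW_mul hη hn hd rfl rfl, ← mul_assoc, cW_succ_mul_cW hd]

theorem gen_mul_kap_triple (h : BMWrels q μ n σ σi) (hij : Adjacent n i j := by omega)
    (hjk : Adjacent n j k := by omega) (hik : FarApart n i k := by omega) :
    σ k * (κ i * κ j * κ k) = κ i * κ j * κ k * σ i := by
  have hki : Commute (σ k) (κ i) := h.commute_gen_kap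
  calc σ k * (κ i * κ j * κ k) = κ i * (σ k * κ j * κ k) := by
        rw [mul_assoc (κ i), ← mul_assoc, hki.eq, mul_assoc, ← mul_assoc (σ k)]
    _ = κ i * κ j * (σ i * κ k) := by
        rw [← h.inv_mul_kap, ← mul_assoc, h.kap_mul_inv, mul_assoc]
    _ = κ i * κ j * κ k * σ i := by rw [(h.commute_gen_kap hik).eq, ← mul_assoc]

theorem gen_mul_kap_mul_kap_mul_kap_comm (h : BMWrels q μ n σ σi)
    (hij : Adjacent n i j := by omega) (hjk : Adjacent n j k := by omega)
    (hik : FarApart n i k := by omega) :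
    σ i * κ j * (κ i * κ k) = σ k * κ j * (κ i * κ k) := by
  rw [← mul_assoc, ← h.inv_mul_kap, (h.commute_kap_kap hik).eq, ← mul_assoc, ← h.inv_mul_kap,
    mul_assoc, mul_assoc, (h.commute_kap_kap hik).eq]

theorem cW_add_three (h : BMWrels q μ n σ σi) (hη : etaC q μ ≠ 0) (hn : p + 2 * (i + 3) ≤ n)
    {e e' f f' : ℕ} (he : e = p + 1 := by omega) (he' : e' = p + 2 := by omega)
    (hf : f = p + 2 * i + 5 := by omega) (hf' : f' = p + 2 * i + 4 := by omega) :
    cW q μ σ p (i + 3) =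
      cW q μ σ e' (i + 1) * (κ e' * κ f') * (κ e * κ f) * cW q μ σ e (i + 2) := by
  set d := cW q μ σ e' (i + 1) with hd
  have hdb : d * cW q μ σ e (i + 2) = cW q μ σ e (i + 2) := by
    rw [hd, he, he']
    exact cW_mul_cW_succ (h.isIdempotentElem_cW hη _ _ (by omega))
  have hK : Commute (κ e * κ f) d := h.commute_kap_cW.mul_left h.commute_kap_cW
  rw [cW_add_two q μ σ p (i + 1) he]
  nth_rw 1 [cW_add_two q μ σ e i (e := e') (f := f')]
  rw [mul_assoc _ d, ← hK.eq, ← mul_assoc, mul_assoc _ d, hdb]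

theorem cW_add_four (h : BMWrels q μ n σ σi) (hη : etaC q μ ≠ 0) (hn : p + 2 * (i + 4) ≤ n) :
    cW q μ σ p (i + 4) = cW q μ σ (p + 3) (i + 1) * (κ (p + 3) * κ (p + 2) * κ (p + 1) *
      (κ (p + 2 * i + 5) * κ (p + 2 * i + 6) * κ (p + 2 * i + 7) * cW q μ σ (p + 1) (i + 3))) := by
  set g := cW q μ σ (p + 3) (i + 1)
  set b := cW q μ σ (p + 1) (i + 3)
  have hgb : g * b = b := by
    have hg := h.isIdempotentElem_cW hη (p + 3) (i + 1) (by omega)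
    have hd := h.isIdempotentElem_cW hη (p + 2) (i + 2) (by omega)
    rw [show b = _ from (cW_mul_cW_succ hd).symm, ← mul_assoc, cW_mul_cW_succ hg]
  set K := κ (p + 2) * κ (p + 2 * i + 6) * (κ (p + 1) * κ (p + 2 * i + 7)) with hK
  have hgK : Commute g K :=
    ((h.commute_kap_cW.mul_left h.commute_kap_cW).mul_left
      (h.commute_kap_cW.mul_left h.commute_kap_cW)).symm
  have h52 : Commute (κ (p + 2 * i + 5)) (κ (p + 2)) := h.commute_kap_kap
  have h561 : Commute (κ (p + 2 * i + 5) * κ (p + 2 * i + 6)) (κ (p + 1)) :=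
    h.commute_kap_kap.mul_left h.commute_kap_kap
  rw [h.cW_add_three hη hn (e := p + 1) (e' := p + 2) (f := p + 2 * i + 7) (f' := p + 2 * i + 6),
    cW_add_two q μ σ (p + 2) i (e := p + 3) (f := p + 2 * i + 5), mul_assoc _ _ (_ * _), ← hK,
    mul_assoc _ g, hgK.eq, mul_assoc _ (K * g), mul_assoc K, hgb, mul_assoc g, ← mul_assoc _ K, hK,
    ← mul_assoc (κ (p + 3) * _), h52.mul_mul_mul_comm, h561.mul_mul_mul_comm, mul_assoc _ _ b]

theorem gen_mul_cW_outer_two (h : BMWrels q μ n σ σi) (hn : p + 4 ≤ n) :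
    σ (p + 3) * cW q μ σ p 2 = σ (p + 1) * cW q μ σ p 2 := by
  have hkap := h.gen_mul_kap_mul_kap_mul_kap_comm (i := p + 1) (j := p + 2) (k := p + 3)
  rw [cW_add_two q μ σ p 0 rfl rfl, cW]
  simp only [smul_mul_assoc, mul_smul_comm, ← mul_assoc] at hkap ⊢
  rw [hkap]

theorem gen_mul_cW_outer_three (h : BMWrels q μ n σ σi) (hη : etaC q μ ≠ 0) (hn : p + 6 ≤ n) :
    σ (p + 5) * cW q μ σ p 3 = σ (p + 1) * cW q μ σ p 3 := by
  have hb : κ (p + 3) * cW q μ σ (p + 1) 2 = etaC q μ • cW q μ σ (p + 1) 2 := by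
    rw [cW_add_two q μ σ (p + 1) 0 rfl rfl, cW, smul_mul_assoc, smul_mul_assoc, mul_smul_comm,
      ← mul_assoc, ← mul_assoc, h.kap_mul_kap_self]
    simp only [smul_mul_assoc, smul_comm (etaC q μ)]
  have hc : cW q μ σ p 3 = (etaC q μ)⁻¹ • (κ (p + 3) * κ (p + 4) * κ (p + 5) *
      (κ (p + 2) * κ (p + 1) * cW q μ σ (p + 1) 2)) := by
    have h42 : Commute (κ (p + 4)) (κ (p + 2)) := h.commute_kap_kap
    have h15 : Commute (κ (p + 1)) (κ (p + 5)) := h.commute_kap_kap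
    have h25 : Commute (κ (p + 2)) (κ (p + 5)) := h.commute_kap_kap
    rw [h.cW_add_three hη hn (e := p + 1) (e' := p + 2) (f := p + 5) (f' := p + 4), cW, h42.symm.eq,
      h15.eq]
    simp only [smul_mul_assoc, mul_assoc]
    rw [h25.left_comm]
  have h5 : σ (p + 5) * (κ (p + 3) * κ (p + 4) * κ (p + 5)) =
      κ (p + 3) * κ (p + 4) * κ (p + 5) * σ (p + 3) := h.gen_mul_kap_triple
  have h1 : Commute (σ (p + 1)) (κ (p + 3) * κ (p + 4) * κ (p + 5)) :=
    (h.commute_gen_kap.mul_right h.commute_gen_kap).mul_right h.commute_gen_kap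
  have hswap : σ (p + 3) * (κ (p + 2) * κ (p + 1) * cW q μ σ (p + 1) 2) =
      σ (p + 1) * (κ (p + 2) * κ (p + 1) * cW q μ σ (p + 1) 2) := by
    have h31 : Commute (κ (p + 3)) (κ (p + 1)) := h.commute_kap_kap
    have hkap := h.gen_mul_kap_mul_kap_mul_kap_comm (i := p + 3) (j := p + 2) (k := p + 1)
    rw [← smul_right_inj hη]
    simp only [← mul_smul_comm, ← hb]
    rw [← mul_assoc _ (κ (p + 3)), mul_assoc _ _ (κ (p + 3)), ← h31.eq]
    simp only [← mul_assoc] at hkap ⊢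
    rw [hkap]
  rw [hc, mul_smul_comm, mul_smul_comm, h1.left_comm, ← hswap, ← mul_assoc, h5, mul_assoc]

theorem gen_mul_cW_outer_add_four (h : BMWrels q μ n σ σi) (hη : etaC q μ ≠ 0)
    (hn : p + 2 * (i + 4) ≤ n)
    (hb : σ (p + 2 * i + 5) * cW q μ σ (p + 1) (i + 3) = σ (p + 3) * cW q μ σ (p + 1) (i + 3)) :
    σ (p + 2 * i + 7) * cW q μ σ p (i + 4) = σ (p + 1) * cW q μ σ p (i + 4) := by
  set g := cW q μ σ (p + 3) (i + 1)
  set b := cW q μ σ (p + 1) (i + 3)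
  set L := κ (p + 3) * κ (p + 2) * κ (p + 1)
  set R := κ (p + 2 * i + 5) * κ (p + 2 * i + 6) * κ (p + 2 * i + 7)
  have hc : cW q μ σ p (i + 4) = g * (L * (R * b)) := h.cW_add_four hη hn
  have hgf : Commute (σ (p + 2 * i + 7)) g := h.commute_gen_cW
  have hge : Commute (σ (p + 1)) g := h.commute_gen_cW
  have hLf : Commute (σ (p + 2 * i + 7)) L :=
    (h.commute_gen_kap.mul_right h.commute_gen_kap).mul_right h.commute_gen_kap
  have hR : Commute (σ (p + 3)) R :=
    (h.commute_gen_kap.mul_right h.commute_gen_kap).mul_right h.commute_gen_kap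
  have hRf : σ (p + 2 * i + 7) * R = R * σ (p + 2 * i + 5) := h.gen_mul_kap_triple
  have hLe : σ (p + 1) * L = L * σ (p + 3) := h.gen_mul_kap_triple
  clear_value L R
  calc σ (p + 2 * i + 7) * cW q μ σ p (i + 4) = g * (L * (σ (p + 2 * i + 7) * R * b)) := by
        rw [hc, hgf.left_comm, hLf.left_comm, ← mul_assoc _ R]
    _ = g * (L * (σ (p + 3) * (R * b))) := by rw [hRf, mul_assoc, hb, hR.left_comm]
    _ = σ (p + 1) * cW q μ σ p (i + 4) := by
        rw [hc, hge.left_comm, ← mul_assoc (σ (p + 1)), hLe, mul_assoc L]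

theorem gen_mul_cW_outer (h : BMWrels q μ n σ σi) (hη : etaC q μ ≠ 0) :
    ∀ p i, p + 2 * (i + 2) ≤ n →
      σ (p + 2 * i + 3) * cW q μ σ p (i + 2) = σ (p + 1) * cW q μ σ p (i + 2)
  | p, 0, hn => h.gen_mul_cW_outer_two hn
  | p, 1, hn => h.gen_mul_cW_outer_three hη hn
  | p, i + 2, hn => by
    have ih := h.gen_mul_cW_outer hη (p + 2) i (by omega)
    refine h.gen_mul_cW_outer_add_four hη hn ?_
    rw [show p + 2 * i + 5 = p + 2 + 2 * i + 3 by omega, cW_add_two q μ σ (p + 1) (i + 1) rfl rfl]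
    simp only [← mul_assoc, ih]

theorem gen_mul_cW (h : BMWrels q μ n σ σi) (hη : etaC q μ ≠ 0) :
    ∀ p i, p + 2 * i ≤ n → ∀ r s, p < r → r < p + i → r + s = 2 * (p + i) →
      σ s * cW q μ σ p i = σ r * cW q μ σ p i
  | p, 0, _, r, s, hr, hr', _ | p, 1, _, r, s, hr, hr', _ => by omega
  | p, i + 2, hn, r, s, hr, hr', hrs => by
    obtain rfl | hr₁ : r = p + 1 ∨ p + 1 < r := by omega
    · obtain rfl : s = p + 2 * i + 3 := by omega
      exact h.gen_mul_cW_outer hη p i hn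
    · have ih := h.gen_mul_cW hη (p + 1) (i + 1) (by omega) r s hr₁ (by omega) (by omega)
      rw [cW_add_two q μ σ p i rfl rfl]
      simp only [← mul_assoc, ih]

end BMWrels

end Contractors

section Main

variable [Ring W] [Algebra ℂ W] {q μ : ℂ} {σ σi : ℕ → W} {n p j : ℕ}

theorem etaC_ne_zero (hl : q - q⁻¹ ≠ 0) (hμ : μ ≠ 0 ∧ μ ≠ q ∧ μ ≠ -q⁻¹) : etaC q μ ≠ 0 :=
  div_ne_zero (mul_ne_zero (sub_ne_zero.2 hμ.2.1.symm)
    fun h => hμ.2.2 (eq_neg_of_add_eq_zero_right h)) (mul_ne_zero hμ.1 hl)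

theorem qnum_ne_zero (hq : q ≠ 0) (hl : q - q⁻¹ ≠ 0) (hj : q ^ (2 * j) ≠ 1) : qnum q j ≠ 0 := by
  refine div_ne_zero (fun h => hj ?_) hl
  rw [inv_pow, sub_eq_zero] at h
  rw [two_mul, pow_add]
  nth_rw 1 [h]
  exact inv_mul_cancel₀ (pow_ne_zero j hq)

theorem add_mul_inv_pow_ne_zero (hq : q ≠ 0) (hμ : μ ≠ -q ^ (3 - 2 * ((j + 1 : ℕ) : ℤ))) :
    μ + q * (q ^ (2 * j))⁻¹ ≠ 0 := by
  rw [show (3 : ℤ) - 2 * ((j + 1 : ℕ) : ℤ) = 1 - ((2 * j : ℕ) : ℤ) by push_cast; ring,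
    zpow_sub₀ hq, zpow_one, zpow_natCast] at hμ
  exact fun h => hμ (eq_neg_of_add_eq_zero_left h)

namespace BMWrels

theorem commute_aW_aW_shift (h : BMWrels q μ n σ σi) (hn : p + 2 * j ≤ n) :
    Commute (aW q μ σ p j) (aW q μ σ (p + j) j) :=
  commute_aW q μ (p + j) j fun _ _ _ => h.commute_gen_aW.symm

theorem aW_shift_mul_aW_mul_cW (h : BMWrels q μ n σ σi) (hq : q ≠ 0) (hl : q - q⁻¹ ≠ 0)
    (hμ : μ ≠ 0) (hη : etaC q μ ≠ 0) (hn : p + 2 * j ≤ n)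
    (hnum : ∀ k, 2 ≤ k → k ≤ j → qnum q k ≠ 0)
    (hpole : ∀ k, 1 ≤ k → k < j → μ + q * (q ^ (2 * k))⁻¹ ≠ 0) :
    aW q μ σ (p + j) j * (aW q μ σ p j * cW q μ σ p j) = aW q μ σ p j * cW q μ σ p j :=
  aW_mul_of_gen_mul hq hl j hnum fun s hs hs' => by
    have hcomm : Commute (σ s) (aW q μ σ p j) := h.commute_gen_aW
    have hslide := h.gen_mul_cW hη p j hn (2 * (p + j) - s) s (by omega) (by omega) (by omega)
    rw [hcomm.left_comm, hslide, ← mul_assoc,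
      h.aW_mul_gen hq hl hμ j (by omega) hnum hpole _ (by omega) (by omega), smul_mul_assoc]

theorem aW_mul_aW_shift_mul_cW (h : BMWrels q μ n σ σi) (hq : q ≠ 0) (hl : q - q⁻¹ ≠ 0)
    (hμ : μ ≠ 0) (hη : etaC q μ ≠ 0) (hn : p + 2 * j ≤ n)
    (hnum : ∀ k, 2 ≤ k → k ≤ j → qnum q k ≠ 0)
    (hpole : ∀ k, 1 ≤ k → k < j → μ + q * (q ^ (2 * k))⁻¹ ≠ 0) :
    aW q μ σ p j * (aW q μ σ (p + j) j * cW q μ σ p j) = aW q μ σ (p + j) j * cW q μ σ p j :=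
  aW_mul_of_gen_mul hq hl j hnum fun r hr hr' => by
    have hcomm : Commute (σ r) (aW q μ σ (p + j) j) := h.commute_gen_aW
    have hslide := h.gen_mul_cW hη p j hn r (2 * (p + j) - r) hr hr' (by omega)
    rw [hcomm.left_comm, ← hslide, ← mul_assoc,
      h.aW_mul_gen hq hl hμ j (by omega) hnum hpole _ (by omega) (by omega), smul_mul_assoc]

end BMWrels

end Main

theorem shifted_antisymmetrizer_contractor_general
    (q μ : ℂ) [Ring W] [Algebra ℂ W]
    (hq : q ≠ 0 ∧ q ≠ 1 ∧ q ≠ -1) (hμ : μ ≠ 0 ∧ μ ≠ q ∧ μ ≠ -q⁻¹) (n p j : ℕ)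
    (hn : p + 2 * j ≤ n)
    (hrange : ∀ i, 2 ≤ i → i ≤ j → q ^ (2 * i) ≠ 1 ∧ μ ≠ -q ^ (3 - 2 * (i : ℤ)))
    (σ σi : ℕ → W) (hrel : BMWrels q μ n σ σi) :
    aW q μ σ (p + j) j * cW q μ σ p j = aW q μ σ p j * cW q μ σ p j := by
  have hl : q - q⁻¹ ≠ 0 := by
    rw [Ne, sub_eq_zero, self_eq_inv₀]
    tauto
  have hη := etaC_ne_zero hl hμ
  have hnum : ∀ k, 2 ≤ k → k ≤ j → qnum q k ≠ 0 := fun k hk hkj =>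
    qnum_ne_zero hq.1 hl (hrange k hk hkj).1
  have hpole : ∀ k, 1 ≤ k → k < j → μ + q * (q ^ (2 * k))⁻¹ ≠ 0 := fun k hk hkj =>
    add_mul_inv_pow_ne_zero hq.1 (hrange (k + 1) (by omega) hkj).2
  rw [← hrel.aW_mul_aW_shift_mul_cW hq.1 hl hμ.1 hη hn hnum hpole,
    (hrel.commute_aW_aW_shift hn).left_comm,
    hrel.aW_shift_mul_aW_mul_cW hq.1 hl hμ.1 hη hn hnum hpole]

/-- Lemma 4.12: in any unital associative ℂ-algebra `W` with elements
`σ₁, …, σ_{2j−1}` satisfying the BMW relations, `a^{(j)↑j}·c^{(2j)} = a^{(j)}·c^{(2j)}`. -/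
theorem shifted_antisymmetrizer_contractor
    (q μ : ℂ) [Ring W] [Algebra ℂ W]
    (hq : q ≠ 0 ∧ q ≠ 1 ∧ q ≠ -1) (hμ : μ ≠ 0 ∧ μ ≠ q ∧ μ ≠ -q⁻¹)
    (j : ℕ) (hj : 1 ≤ j)
    (hrange : ∀ i, 2 ≤ i → i ≤ 2 * j → q ^ (2 * i) ≠ 1 ∧ μ ≠ -q ^ (3 - 2 * (i : ℤ)))
    (σ σi : ℕ → W)
    (hrel : BMWrels q μ (2 * j) σ σi) :
    aW q μ σ j j * cW q μ σ 0 j = aW q μ σ 0 j * cW q μ σ 0 j := by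
  simpa only [zero_add] using shifted_antisymmetrizer_contractor_general q μ hq hμ (2 * j) 0 j
    (by omega) (fun i hi hij => hrange i hi (by omega)) σ σi hrel

end
end
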